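/- Fix n ≥ 2. For σ : Fin n → Equiv.Perm (Fin k), let H(σ) be the preimage, under the componentwise signature homomorphism from (Fin n → Equiv.Perm (Fin k)) to (Fin n → ℤˣ), of the subgroup of (Fin n → ℤˣ) generated by the n cyclic shifts of the signature tuple i ↦ Equiv.Perm.sign (σ i). Then the sequence k ↦ (Nat.card {σ : Fin n → Equiv.Perm (Fin k) // G_c(σ) = H(σ)} : ℝ) / (k !)^n tends to 1 as k → ∞; that is, the group circularly generated by n uniformly random permutations of k points generically equals A_k^n ⋊ ⟨c sgn_π(σ_0, …, σ_{n−1})⟩, the subgroup of all n-tuples of permutations whose signature tuple lies in the group generated by the cyclic shifts of (sign σ_0, …, sign σ_{n−1}). -/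

import Mathlib

/-- The group circularly generated by a tuple `σ : Fin n → Equiv.Perm (Fin k)`:
the subgroup of the direct product generated by the `n` cyclic shifts of `σ`. -/
def circGen {n k : ℕ} (σ : Fin n → Equiv.Perm (Fin k)) :
    Subgroup (Fin n → Equiv.Perm (Fin k)) :=
  Subgroup.closure (Set.range fun j : Fin n => fun i : Fin n => σ (i + j))

/-- The componentwise signature homomorphism. -/
def signPi (n k : ℕ) : (Fin n → Equiv.Perm (Fin k)) →* (Fin n → ℤˣ) :=
  Pi.monoidHom fun i =>
    Equiv.Perm.sign.comp (Pi.evalMonoidHom (fun _ : Fin n => Equiv.Perm (Fin k)) i)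

/-- `A_k^n ⋊ ⟨c sgn_π(σ)⟩`: the preimage under the componentwise signature
homomorphism of the subgroup of `Fin n → ℤˣ` generated by the cyclic shifts of the
signature tuple of `σ`. -/
def signGroup {n k : ℕ} (σ : Fin n → Equiv.Perm (Fin k)) :
    Subgroup (Fin n → Equiv.Perm (Fin k)) :=
  Subgroup.comap (signPi n k)
    (Subgroup.closure
      (Set.range fun j : Fin n => fun i : Fin n => Equiv.Perm.sign (σ (i + j))))

open Equiv Equiv.Perm MulAction

/-- The commutator of two permutations whose supports meet in one point is a 3-cycle. -/
lemma isThreeCycle_comm_aux {α : Type*} [Fintype α] [DecidableEq α] (g h : Perm α) (x : α)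
    (hgx : g x ≠ x) (hhx : h x ≠ x) (hx : ∀ y, g y ≠ y → h y ≠ y → y = x) :
    (g * h * g⁻¹ * h⁻¹).IsThreeCycle := by
  have hg : ∀ y, h y ≠ y → y ≠ x → g y = y := fun y h1 h2 => by
    by_contra h3; exact h2 (hx y h3 h1)
  have hh : ∀ y, g y ≠ y → y ≠ x → h y = y := fun y h1 h2 => by
    by_contra h3; exact h2 (hx y h1 h3)
  have ggx : g (g x) ≠ g x := fun e => hgx (g.injective e)
  have hhhx : h (h x) ≠ h x := fun e => hhx (h.injective e)
  have e1 : h (g x) = g x := hh _ ggx hgx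
  have e2 : g (h x) = h x := hg _ hhhx hhx
  have hne : h x ≠ g x := fun e => ggx (by rw [← e, e2])
  have key : g * h * g⁻¹ * h⁻¹ = swap x (h x) * swap x (g x) := by
    rw [mul_inv_eq_iff_eq_mul, mul_inv_eq_iff_eq_mul]
    ext y
    simp only [Perm.mul_apply]
    by_cases h1 : y = x
    · subst h1
      rw [e2, e1, swap_apply_right, swap_apply_left]
    · by_cases h2 : g y = y
      · rw [h2]
        by_cases h3 : h y = y
        · rw [h3, h2]
          have : y ≠ g x := fun e => ggx (by rw [← e, h2])
          have : y ≠ h x := fun e => hhhx (by rw [← e, h3])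
          rw [swap_apply_of_ne_of_ne (a := x) (b := g x), swap_apply_of_ne_of_ne] <;> assumption
        · by_cases h4 : h y = x
          · rw [h4, swap_apply_left, swap_apply_of_ne_of_ne hgx (Ne.symm hne)]
          · have h5 : h (h y) ≠ h y := fun e => h3 (h.injective e)
            rw [hg _ h5 h4]
            have : h y ≠ g x := fun e => ggx (by rw [← e, hg _ h5 h4])
            have : h y ≠ h x := fun e => h1 (h.injective e)
            rw [swap_apply_of_ne_of_ne (a := x) (b := g x), swap_apply_of_ne_of_ne] <;> assumption
      · have h3 : h y = y := hh y h2 h1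
        rw [h3]
        by_cases h4 : g y = x
        · rw [h4, swap_apply_of_ne_of_ne hhx hne, swap_apply_right]
        · have h5 : g (g y) ≠ g y := fun e => h2 (g.injective e)
          have h6 := hh _ h5 h4
          rw [h6]
          have : g y ≠ g x := fun e => h1 (g.injective e)
          have : g y ≠ h x := fun e => hhhx (by rw [← e, h6])
          rw [swap_apply_of_ne_of_ne (a := x) (b := g x), swap_apply_of_ne_of_ne] <;> assumption
  rw [key]
  exact isThreeCycle_swap_mul_swap_same (Ne.symm hhx) (Ne.symm hgx) hne

/-- Theorem of Jordan for a prime cycle of length at most half of the degree. -/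
lemma alternating_le_of_prime_cycle {α : Type*} [Fintype α] [DecidableEq α]
    (H : Subgroup (Perm α)) (hH : IsPreprimitive H α) (g : Perm α) (hg : g ∈ H)
    (hc : g.IsCycle) (hp : g.support.card.Prime) (h2 : 2 * g.support.card ≤ Fintype.card α) :
    alternatingGroup α ≤ H := by
  classical
  set p := g.support.card with hpdef
  have hp2 := hp.two_le
  have hcompl : ((g.support : Set α)ᶜ).ncard = Fintype.card α - p := by
    rw [Set.ncard_compl, Set.ncard_coe_finset, Nat.card_eq_fintype_card]
  have htr := isPretransitive_of_isCycle_mem hc hg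
  have hcard : Nat.card (SubMulAction.ofFixingSubgroup H (g.support : Set α)ᶜ) = p := by
    have : Nat.card (SubMulAction.ofFixingSubgroup H (g.support : Set α)ᶜ)
        = Nat.card ((g.support : Set α)) := by
      apply Nat.card_congr
      refine Equiv.subtypeEquivRight (fun x => ?_)
      rw [SubMulAction.mem_ofFixingSubgroup_iff]
      simp
    rw [this, Nat.card_coe_set_eq, Set.ncard_coe_finset]
  have hprim : IsPreprimitive (fixingSubgroup H (g.support : Set α)ᶜ)
      (SubMulAction.ofFixingSubgroup H (g.support : Set α)ᶜ) :=
    IsPreprimitive.of_prime_card (by rw [hcard]; exact hp)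
  obtain ⟨m, hm⟩ : ∃ m, Fintype.card α - p = m + 1 := ⟨Fintype.card α - p - 1, by omega⟩
  have hmul : IsMultiplyPretransitive H α p := by
    rcases Nat.lt_or_ge (m + 2) (Fintype.card α) with h | h
    · have := hH.isMultiplyPreprimitive (hcompl.trans hm) (by rwa [Nat.card_eq_fintype_card]) hprim
      have h3 : IsMultiplyPretransitive H α (m + 2) := this.isMultiplyPretransitive
      apply isMultiplyPretransitive_of_le' (n := m + 2) (by omega)
      rw [ENat.card_eq_coe_fintype_card]
      exact_mod_cast h.le
    · omega
  obtain ⟨a, ha⟩ : g.support.Nonempty := Finset.card_pos.mp (by omega)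
  obtain ⟨T, hT, hTc⟩ : ∃ T ⊆ g.supportᶜ, T.card = p - 1 :=
    Finset.exists_subset_card_eq (by rw [Finset.card_compl]; omega)
  have haT : a ∉ T := fun h => by
    have := hT h
    simp only [Finset.mem_compl] at this
    exact this ha
  have hT' : (insert a T).card = p := by rw [Finset.card_insert_of_notMem haT]; omega
  let e1 : Fin p ≃ g.support := (Finset.equivFinOfCardEq rfl).symm
  let e2 : Fin p ≃ (insert a T : Finset α) := (Finset.equivFinOfCardEq hT').symm
  obtain ⟨h, hh⟩ := hmul.exists_smul_eq (e1.toEmbedding.trans (Function.Embedding.subtype _))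
    (e2.toEmbedding.trans (Function.Embedding.subtype _))
  have hh' : ∀ i, (h : Perm α) (e1 i : α) = e2 i := fun i => by
    have := DFunLike.congr_fun hh i
    exact this
  have hmaps : ∀ x, x ∈ g.support ↔ (h : Perm α) x ∈ insert a T := by
    have h1 : g.support.image (h : Perm α) = insert a T := by
      apply Finset.eq_of_subset_of_card_le
      · intro y hy
        obtain ⟨x, hx, rfl⟩ := Finset.mem_image.mp hy
        have := hh' (e1.symm ⟨x, hx⟩)
        rw [Equiv.apply_symm_apply] at this
        rw [this]
        exact (e2 _).2
      · rw [Finset.card_image_of_injective _ (h : Perm α).injective, hT']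
    intro x
    rw [← h1]
    simp
  set g' : Perm α := (h : Perm α) * g * (h : Perm α)⁻¹ with hg'
  have hg'm : g' ∈ H := H.mul_mem (H.mul_mem h.2 hg) (H.inv_mem h.2)
  have hmov : ∀ y, g' y ≠ y ↔ y ∈ insert a T := by
    intro y
    have := hmaps ((h : Perm α)⁻¹ y)
    rw [show (h : Perm α) ((h : Perm α)⁻¹ y) = y from (h : Perm α).apply_symm_apply y, Perm.mem_support] at this
    rw [← this, hg', Perm.mul_apply, Perm.mul_apply, ne_eq, ne_eq, ← Perm.eq_inv_iff_eq]
  have h3 : (g * g' * g⁻¹ * g'⁻¹).IsThreeCycle := by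
    apply isThreeCycle_comm_aux g g' a (by simpa using ha) ((hmov a).2 (by simp))
    intro y h1 h2
    rw [hmov, Finset.mem_insert] at h2
    rcases h2 with h2 | h2
    · exact h2
    · have := hT h2
      simp only [Finset.mem_compl, Perm.mem_support] at this
      exact absurd h1 this
  exact alternatingGroup_le_of_isPreprimitive_of_isThreeCycle_mem hH h3
    (H.mul_mem (H.mul_mem (H.mul_mem hg hg'm) (H.inv_mem hg)) (H.inv_mem hg'm))

lemma exists_pow_prime_cycle {α : Type*} [Fintype α] [DecidableEq α] (s : Perm α) (p : ℕ)
    (hp : p.Prime) (h1 : p ∈ s.cycleType)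
    (h2 : (s.cycleType.filter (p ∣ ·)).card ≤ 1) :
    ∃ r : ℕ, ¬ p ∣ r ∧ ∀ m, ¬ p ∣ m →
      (s ^ (r * m)).IsCycle ∧ (s ^ (r * m)).support.card = p := by
  rw [cycleType_def, Multiset.mem_map] at h1
  obtain ⟨c, hc, hcp⟩ := h1
  simp only [Finset.mem_val] at hc
  simp only [Function.comp_apply] at hcp
  have hcyc : c.IsCycle := (mem_cycleFactorsFinset_iff.mp hc).1
  have hdisj : Disjoint (s * c⁻¹) c := disjoint_mul_inv_of_mem_cycleFactorsFinset hc
  set t := s * c⁻¹ with ht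
  have hs : s = t * c := by simp [ht]
  have hct : s.cycleType = t.cycleType + {p} := by
    rw [hs, hdisj.cycleType_mul, hcyc.cycleType, hcp]
  have hpt : ¬ p ∣ orderOf t := by
    rw [← lcm_cycleType]
    intro hd
    have : ∃ x ∈ t.cycleType, p ∣ x := by
      by_contra hcon
      push Not at hcon
      have : ∀ m : Multiset ℕ, (∀ x ∈ m, ¬ p ∣ x) → ¬ p ∣ m.lcm := by
        intro m
        induction m using Multiset.induction with
        | empty => intro _ h; simp at h; exact hp.one_lt.ne' h
        | cons a m ih =>
          intro h hdv
          rw [Multiset.lcm_cons] at hdv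
          have := (hdv.trans (Nat.lcm_dvd_mul a m.lcm))
          rcases hp.dvd_mul.mp this with h3 | h3
          · exact h a (by simp) h3
          · exact ih (fun x hx => h x (by simp [hx])) h3
      exact this _ hcon hd
    obtain ⟨x, hx, hpx⟩ := this
    have : 0 < (t.cycleType.filter (p ∣ ·)).card :=
      Multiset.card_pos_iff_exists_mem.mpr ⟨x, Multiset.mem_filter.mpr ⟨hx, hpx⟩⟩
    rw [hct, Multiset.filter_add, Multiset.card_add, Multiset.filter_singleton,
      if_pos dvd_rfl] at h2
    simp only [Multiset.card_singleton] at h2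
    omega
  refine ⟨orderOf t, hpt, ?_⟩
  · intro m hm
    have e : s ^ (orderOf t * m) = c ^ (orderOf t * m) := by
      rw [hs, hdisj.commute.mul_pow, pow_mul t, pow_orderOf_eq_one, one_pow, one_mul]
    have hcop : (orderOf t * m).Coprime (orderOf c) := by
      rw [hcyc.orderOf, hcp]
      refine Nat.Coprime.symm ((Nat.Prime.coprime_iff_not_dvd hp).mpr ?_)
      rw [hp.dvd_mul]
      tauto
    rw [e, hcyc.pow_iff, support_pow_coprime hcop]
    exact ⟨hcop, hcp⟩

lemma circGen_eq_of_good {n k : ℕ} [NeZero n] (σ : Fin n → Perm (Fin k)) (hk : 5 ≤ k)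
    (H : IsPreprimitive (Subgroup.closure {σ 0, σ 1}) (Fin k)) (p : ℕ) (hp : p.Prime)
    (hp3 : 3 ≤ p) (hpk : 2 * p ≤ k) (h1 : p ∈ (σ 0).cycleType)
    (h2 : ((σ 0).cycleType.filter (p ∣ ·)).card ≤ 1)
    (h3 : ∀ j, j ≠ 0 → ¬ p ∣ orderOf (σ j)) : circGen σ = signGroup σ := by
  classical
  obtain ⟨r, hr, hrm⟩ := exists_pow_prime_cycle (σ 0) p hp h1 h2
  set m := ∏ j ∈ Finset.univ.erase (0 : Fin n), orderOf (σ j) with hm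
  have hpm : ¬ p ∣ m := by
    rw [hm, hp.prime.dvd_finsetProd_iff]
    rintro ⟨j, hj, hd⟩
    exact h3 j (Finset.ne_of_mem_erase hj) hd
  obtain ⟨hc, hcp⟩ := hrm m hpm
  set R := r * m with hR
  have hone : ∀ j, j ≠ 0 → σ j ^ R = 1 := by
    intro j hj
    rw [← orderOf_dvd_iff_pow_eq_one]
    exact (Finset.dvd_prod_of_mem _ (Finset.mem_erase.mpr ⟨hj, Finset.mem_univ j⟩)).trans
      (Dvd.intro_left r rfl)
  have hA : alternatingGroup (Fin k) ≤ Subgroup.closure {σ 0, σ 1} := by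
    apply alternating_le_of_prime_cycle _ H (σ 0 ^ R) _ hc (by rwa [hcp])
      (by rw [hcp, Fintype.card_fin]; exact hpk)
    exact Subgroup.pow_mem _ (Subgroup.subset_closure (by simp)) _
  set G := circGen σ with hG
  have hshift : ∀ j, (fun i => σ (i + j)) ∈ G := fun j => Subgroup.subset_closure ⟨j, rfl⟩
  have hproj : ∀ i, ∀ a ∈ alternatingGroup (Fin k), ∃ y ∈ G, y i = a := by
    intro i a ha
    have : Subgroup.closure {σ 0, σ 1} ≤ G.map (Pi.evalMonoidHom _ i) := by
      rw [Subgroup.closure_le]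
      rintro x (rfl | rfl)
      · exact ⟨_, hshift (0 - i), by simp⟩
      · exact ⟨_, hshift (1 - i), by simp⟩
    obtain ⟨y, hy, e⟩ := this (hA ha)
    exact ⟨y, hy, e⟩
  have hsing : ∀ i, Pi.mulSingle i (σ 0 ^ R) ∈ G := by
    intro i
    have : Pi.mulSingle i (σ 0 ^ R) = (fun i' => σ (i' + (0 - i))) ^ R := by
      ext1 i'
      rw [Pi.pow_apply]
      by_cases h : i' = i
      · subst h; simp
      · rw [Pi.mulSingle_eq_of_ne h, hone]
        simpa [add_neg_eq_zero] using h
    rw [this]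
    exact Subgroup.pow_mem _ (hshift _) _
  have hsgn : σ 0 ^ R ∈ alternatingGroup (Fin k) := by
    rw [mem_alternatingGroup, hc.sign, hcp, (hp.odd_of_ne_two (by omega)).neg_one_pow, neg_neg]
  have hAi : ∀ i, ∀ a ∈ alternatingGroup (Fin k), Pi.mulSingle i a ∈ G := by
    intro i
    let N : Subgroup (alternatingGroup (Fin k)) :=
      (G.comap (MonoidHom.mulSingle (fun _ : Fin n => Perm (Fin k)) i)).subgroupOf _
    have hNn : N.Normal := by
      constructor
      intro x hx a
      obtain ⟨y, hy, e⟩ := hproj i a a.2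
      have hx' : Pi.mulSingle i (x : Perm (Fin k)) ∈ G := hx
      change Pi.mulSingle i ((a * x * a⁻¹ : alternatingGroup (Fin k)) : Perm (Fin k)) ∈ G
      have : Pi.mulSingle i ((a * x * a⁻¹ : alternatingGroup (Fin k)) : Perm (Fin k))
          = y * Pi.mulSingle i (x : Perm (Fin k)) * y⁻¹ := by
        ext1 i'
        by_cases h : i' = i
        · subst h; simp [e]
        · simp [Pi.mulSingle_eq_of_ne h]
      rw [this]
      exact G.mul_mem (G.mul_mem hy hx') (G.inv_mem hy)
    have := alternatingGroup.isSimpleGroup (α := Fin k) (by simpa using hk)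
    have hN : N = ⊤ := by
      rcases hNn.eq_bot_or_eq_top with h | h
      · exfalso
        have h4 : (⟨σ 0 ^ R, hsgn⟩ : alternatingGroup (Fin k)) ∈ N := hsing i
        rw [h, Subgroup.mem_bot] at h4
        exact hc.ne_one (congrArg Subtype.val h4)
      · exact h
    intro a ha
    have : (⟨a, ha⟩ : alternatingGroup (Fin k)) ∈ N := hN ▸ Subgroup.mem_top _
    exact this
  have hker : (signPi n k).ker ≤ G := by
    intro x hx
    apply Subgroup.pi_mem_of_mulSingle_mem
    intro i
    apply hAi
    rw [MonoidHom.mem_ker] at hx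
    exact congrFun hx i
  have hmap : Subgroup.closure
      (Set.range fun j : Fin n => fun i : Fin n => Equiv.Perm.sign (σ (i + j)))
      = G.map (signPi n k) := by
    rw [hG, circGen, MonoidHom.map_closure, ← Set.range_comp]
    rfl
  rw [signGroup, hmap, Subgroup.comap_map_eq, sup_eq_left.mpr hker]

lemma sum_cycle_fiber {k a : ℕ} (c : Perm (Fin k)) (hc : c.cycleType = {a})
    (F : Multiset ℕ → ℝ) :
    ∑ σ : Perm (Fin k) with c ∈ σ.cycleFactorsFinset, F σ.cycleType
      = ∑ τ : Perm (Fin (k - a)), F (a ::ₘ τ.cycleType) := by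
  classical
  have hcyc : c.IsCycle := by rw [← card_cycleType_eq_one, hc]; simp
  have hca : c.support.card = a := by
    have := hcyc.cycleType
    rw [hc] at this
    exact (Multiset.singleton_inj.mp this).symm
  have hcard : Fintype.card {x // x ∉ c.support} = k - a := by
    rw [Fintype.card_subtype_compl, Fintype.card_fin, Fintype.card_coe, hca]
  let e : Fin (k - a) ≃ {x // x ∉ c.support} :=
    (Fintype.equivFinOfCardEq hcard).symm
  have hdis : ∀ τ : Perm (Fin (k - a)), Disjoint (τ.extendDomain e) c := by
    intro τ x
    by_cases hx : x ∉ c.support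
    · right; simpa using hx
    · left; exact extendDomain_apply_not_subtype _ _ hx
  symm
  refine Finset.sum_bij (fun τ _ => τ.extendDomain e * c) ?_ ?_ ?_ ?_
  · intro τ _
    simp only [Finset.mem_filter, Finset.mem_univ, true_and]
    rw [mem_cycleFactorsFinset_iff]
    refine ⟨hcyc, fun x hx => ?_⟩
    rw [Perm.mul_apply]
    have h2 : c x ∈ c.support := apply_mem_support.mpr hx
    exact (extendDomain_apply_not_subtype _ _ (by simpa using h2)).symm
  · intro τ _ τ' _ h
    exact extendDomainHom_injective e (mul_right_cancel h)
  · intro σ hσ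
    simp only [Finset.mem_filter, Finset.mem_univ, true_and] at hσ
    have hd : Disjoint (σ * c⁻¹) c := disjoint_mul_inv_of_mem_cycleFactorsFinset hσ
    set t := σ * c⁻¹ with ht
    have hpres : ∀ x, t x ∉ c.support ↔ x ∉ c.support := by
      have h1 : ∀ x, x ∈ c.support → t x = x := fun x hx => by
        rcases hd x with h | h
        · exact h
        · exact absurd h (by simpa using hx)
      intro x
      rw [not_iff_not]
      symm
      constructor
      · intro hx; rwa [h1 x hx]
      · intro hx
        have := h1 _ hx
        rw [t.injective this] at hx
        exact hx
    refine ⟨e.symm.permCongr (t.subtypePerm hpres), Finset.mem_univ _, ?_⟩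
    have : (e.symm.permCongr (t.subtypePerm hpres)).extendDomain e = t := by
      ext1 x
      by_cases hx : x ∉ c.support
      · rw [extendDomain_apply_subtype (e.symm.permCongr (t.subtypePerm hpres)) e hx]
        simp [Equiv.permCongr_apply]
      · rw [extendDomain_apply_not_subtype (e.symm.permCongr (t.subtypePerm hpres)) e hx]
        rcases hd x with h | h
        · exact h.symm
        · exact absurd h (by simpa using hx)
    rw [this, ht]
    simp
  · intro τ _
    rw [(hdis τ).cycleType_mul, cycleType_extendDomain, hc, ← Multiset.singleton_add, add_comm]

lemma sum_count_mul {k a : ℕ} (ha : 2 ≤ a) (hak : a ≤ k) (F : Multiset ℕ → ℝ) :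
    ∑ σ : Perm (Fin k), (σ.cycleType.count a : ℝ) * F σ.cycleType
      = ((a - 1).factorial * k.choose a : ℕ) *
        ∑ τ : Perm (Fin (k - a)), F (a ::ₘ τ.cycleType) := by
  classical
  have h1 : ∀ σ : Perm (Fin k), (σ.cycleType.count a : ℝ)
      = ∑ c : Perm (Fin k) with c.cycleType = {a},
        if c ∈ σ.cycleFactorsFinset then (1 : ℝ) else 0 := by
    intro σ
    rw [cycleType_def, Multiset.count_map, Finset.sum_boole, Finset.filter_filter]
    norm_cast
    rw [← Finset.filter_val, Finset.card_val]
    congr 1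
    ext c
    simp only [Finset.mem_filter, Finset.mem_univ, true_and, Function.comp_apply]
    constructor
    · rintro ⟨h, h2⟩
      refine ⟨?_, h⟩
      rw [(mem_cycleFactorsFinset_iff.mp h).1.cycleType, ← h2]
    · rintro ⟨h, h2⟩
      refine ⟨h2, ?_⟩
      rw [(mem_cycleFactorsFinset_iff.mp h2).1.cycleType] at h
      exact (Multiset.singleton_inj.mp h).symm
  simp_rw [h1, Finset.sum_mul]
  rw [Finset.sum_comm]
  have h2 : ∀ c ∈ (Finset.univ.filter fun c : Perm (Fin k) => c.cycleType = {a}),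
      ∑ σ : Perm (Fin k), (if c ∈ σ.cycleFactorsFinset then (1 : ℝ) else 0) * F σ.cycleType
       = ∑ τ : Perm (Fin (k - a)), F (a ::ₘ τ.cycleType) := by
    intro c hc
    rw [← sum_cycle_fiber c (by simpa using hc) F, Finset.sum_filter]
    simp
  rw [Finset.sum_congr rfl h2, Finset.sum_const, card_of_cycleType_singleton ha (by simpa using hak),
    Fintype.card_fin, nsmul_eq_mul]

/-- average of a function of the cycle type over all permutations of `k` points -/
noncomputable def cycAvg (k : ℕ) (F : Multiset ℕ → ℝ) : ℝ :=
  (∑ σ : Perm (Fin k), F σ.cycleType) / (k.factorial : ℝ)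

lemma cycAvg_count_mul {k a : ℕ} (ha : 2 ≤ a) (hak : a ≤ k) (F : Multiset ℕ → ℝ) :
    cycAvg k (fun m => (m.count a : ℝ) * F m)
      = (1 / a) * cycAvg (k - a) (fun m => F (a ::ₘ m)) := by
  unfold cycAvg
  rw [sum_count_mul ha hak]
  have h1 : ((k.choose a * a.factorial * (k - a).factorial : ℕ) : ℝ) = k.factorial := by
    rw [Nat.choose_mul_factorial_mul_factorial hak]
  have h2 : (a.factorial : ℝ) = a * (a - 1).factorial := by
    rw [← Nat.mul_factorial_pred (by omega)]; push_cast; ring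
  push_cast at h1 ⊢
  rw [← h1, h2]
  have : (a : ℝ) ≠ 0 := by positivity
  have := Nat.factorial_ne_zero (a - 1)
  have := Nat.factorial_ne_zero (k - a)
  have := (Nat.choose_pos hak).ne'
  field_simp

lemma cycAvg_mono {k : ℕ} {F G : Multiset ℕ → ℝ}
    (h : ∀ σ : Perm (Fin k), F σ.cycleType ≤ G σ.cycleType) :
    cycAvg k F ≤ cycAvg k G := by
  unfold cycAvg
  gcongr with σ
  exact h _

lemma cycAvg_sum {k : ℕ} {ι : Type*} (s : Finset ι) (F : ι → Multiset ℕ → ℝ) :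
    cycAvg k (fun m => ∑ i ∈ s, F i m) = ∑ i ∈ s, cycAvg k (F i) := by
  unfold cycAvg
  rw [Finset.sum_comm, Finset.sum_div]

lemma cycAvg_add {k : ℕ} (F G : Multiset ℕ → ℝ) :
    cycAvg k (fun m => F m + G m) = cycAvg k F + cycAvg k G := by
  unfold cycAvg
  rw [Finset.sum_add_distrib, add_div]

lemma cycAvg_const_mul {k : ℕ} (c : ℝ) (F : Multiset ℕ → ℝ) :
    cycAvg k (fun m => c * F m) = c * cycAvg k F := by
  unfold cycAvg
  rw [← Finset.mul_sum, mul_div_assoc]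

lemma cycAvg_const {k : ℕ} (c : ℝ) : cycAvg k (fun _ => c) = c := by
  unfold cycAvg
  rw [Finset.sum_const, Finset.card_univ, Fintype.card_perm, Fintype.card_fin, nsmul_eq_mul]
  have := Nat.factorial_ne_zero k
  field_simp

lemma cycAvg_count {k a : ℕ} (ha : 2 ≤ a) (hak : a ≤ k) :
    cycAvg k (fun m => (m.count a : ℝ)) = 1 / a := by
  have := cycAvg_count_mul ha hak (fun _ => 1)
  simpa [cycAvg_const] using this

lemma cycAvg_count_le {k a : ℕ} (ha : 2 ≤ a) :
    cycAvg k (fun m => (m.count a : ℝ)) ≤ 1 / a := by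
  rcases le_or_gt a k with h | h
  · exact (cycAvg_count ha h).le
  · have : cycAvg k (fun m => (m.count a : ℝ)) = 0 := by
      unfold cycAvg
      rw [Finset.sum_eq_zero, zero_div]
      intro σ _
      beta_reduce
      rw [Multiset.count_eq_zero_of_notMem]
      · simp
      · intro hm
        have h1 := le_card_support_of_mem_cycleType hm
        have h2 := σ.support.card_le_univ
        rw [Fintype.card_fin] at h2
        omega
    rw [this]; positivity

lemma cycAvg_count_mul_count_le {k a b : ℕ} (ha : 2 ≤ a) (hb : 2 ≤ b) (hak : a ≤ k) :
    cycAvg k (fun m => (m.count a : ℝ) * (m.count b : ℝ))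
      ≤ (1 / a) * (1 / b) + if a = b then (1 / a : ℝ) else 0 := by
  rw [cycAvg_count_mul ha hak (fun m => (m.count b : ℝ))]
  have : (fun m : Multiset ℕ => ((a ::ₘ m).count b : ℝ))
      = fun m => (m.count b : ℝ) + (if a = b then 1 else 0 : ℝ) := by
    ext m
    rw [Multiset.count_cons]
    split_ifs with h1 h2 h2 <;> first | (exfalso; omega) | (push_cast; rfl)
  rw [this, cycAvg_add, cycAvg_const, mul_add]
  gcongr
  · exact cycAvg_count_le hb
  · split_ifs <;> simp

lemma card_filter_dvd_le (p k : ℕ) (m : Multiset ℕ) (hm : ∀ x ∈ m, 0 < x ∧ x ≤ k) :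
    (m.filter (p ∣ ·)).card ≤ ∑ i ∈ Finset.Icc 1 k, m.count (i * p) := by
  induction m using Multiset.induction with
  | empty => simp
  | cons a m ih =>
    have ih' := ih (fun x hx => hm x (by simp [hx]))
    simp only [Multiset.count_cons, Finset.sum_add_distrib]
    rw [Multiset.filter_cons, Multiset.card_add, add_comm]
    refine add_le_add ih' ?_
    split_ifs with h
    · obtain ⟨i, hi⟩ := h
      have h0 := hm a (by simp)
      have hi1 : i ∈ Finset.Icc 1 k := by
        rw [Finset.mem_Icc]
        constructor
        · rcases Nat.eq_zero_or_pos i with h | h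
          · subst h; omega
          · exact h
        · have hp : 0 < p := by
            rcases Nat.eq_zero_or_pos p with h | h
            · subst h; omega
            · exact h
          nlinarith
      rw [Multiset.card_singleton]
      have h3 := Finset.single_le_sum (f := fun i => if i * p = a then 1 else 0)
        (fun _ _ => Nat.zero_le _) hi1
      rw [if_pos (by rw [hi, mul_comm])] at h3
      exact h3
    · simp

noncomputable def dvdCount (p : ℕ) (m : Multiset ℕ) : ℝ := ((m.filter (p ∣ ·)).card : ℝ)

noncomputable def harm (k : ℕ) : ℝ := ∑ i ∈ Finset.Icc 1 k, (1 / i : ℝ)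

lemma harm_mono {a b : ℕ} (h : a ≤ b) : harm a ≤ harm b := by
  unfold harm
  exact Finset.sum_le_sum_of_subset_of_nonneg (Finset.Icc_subset_Icc le_rfl h)
    (fun _ _ _ => by positivity)

lemma cycAvg_dvdCount_le (k p : ℕ) (hp : 2 ≤ p) :
    cycAvg k (dvdCount p) ≤ harm k / p := by
  calc cycAvg k (dvdCount p)
      ≤ cycAvg k (fun m => ∑ i ∈ Finset.Icc 1 k, (m.count (i * p) : ℝ)) := by
        apply cycAvg_mono
        intro σ
        unfold dvdCount
        have := card_filter_dvd_le p k σ.cycleType (fun x hx =>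
          ⟨by have := two_le_of_mem_cycleType hx; omega, by
            have h1 := le_card_support_of_mem_cycleType hx
            have h2 := σ.support.card_le_univ
            rw [Fintype.card_fin] at h2
            omega⟩)
        exact_mod_cast this
    _ = ∑ i ∈ Finset.Icc 1 k, cycAvg k (fun m => (m.count (i * p) : ℝ)) := cycAvg_sum _ _
    _ ≤ ∑ i ∈ Finset.Icc 1 k, (1 / i : ℝ) / p := by
        refine Finset.sum_le_sum (fun i hi => ?_)
        rw [Finset.mem_Icc] at hi
        refine (cycAvg_count_le (by nlinarith)).trans (le_of_eq ?_)
        push_cast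
        rw [div_div]
    _ = harm k / p := by rw [harm, Finset.sum_div]

lemma cycAvg_double_le {k p : ℕ} (hp : 2 ≤ p) (hpk : p ≤ k) :
    cycAvg k (fun m => (m.count p : ℝ) * (dvdCount p m - 1)) ≤ harm k / (p : ℝ) ^ 2 := by
  rw [cycAvg_count_mul hp hpk (fun m => dvdCount p m - 1)]
  have : (fun m => dvdCount p (p ::ₘ m) - 1) = dvdCount p := by
    ext m
    unfold dvdCount
    rw [Multiset.filter_cons_of_pos _ dvd_rfl, Multiset.card_cons]
    push_cast; ring
  rw [this]
  have h1 := cycAvg_dvdCount_le (k - p) p hp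
  have h2 := harm_mono (Nat.sub_le k p)
  calc (1 / (p : ℝ)) * cycAvg (k - p) (dvdCount p) ≤ (1 / p) * (harm k / p) := by
        gcongr
        exact h1.trans (by gcongr)
    _ = _ := by ring

/-- Chebyshev: probability of no cycle with length in `S`. -/
lemma cycAvg_none_le {k : ℕ} (S : Finset ℕ) (hS : ∀ p ∈ S, 2 ≤ p ∧ p ≤ k)
    (hpos : 0 < ∑ p ∈ S, (1 / p : ℝ)) :
    cycAvg k (fun m => if ∃ p ∈ S, p ∈ m then 0 else 1) ≤ 1 / ∑ p ∈ S, (1 / p : ℝ) := by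
  classical
  set μ := ∑ p ∈ S, (1 / p : ℝ) with hμ
  let M : Multiset ℕ → ℝ := fun m => ∑ p ∈ S, (m.count p : ℝ)
  have hM1 : cycAvg k M = μ := by
    rw [cycAvg_sum]
    exact Finset.sum_congr rfl (fun p hp => cycAvg_count (hS p hp).1 (hS p hp).2)
  have hM2 : cycAvg k (fun m => M m * M m) ≤ μ ^ 2 + μ := by
    have : (fun m => M m * M m)
        = fun m => ∑ p ∈ S, ∑ q ∈ S, (m.count p : ℝ) * (m.count q : ℝ) := by
      ext m; exact Finset.sum_mul_sum _ _ _ _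
    rw [this, cycAvg_sum]
    simp_rw [cycAvg_sum]
    calc _ ≤ ∑ p ∈ S, ∑ q ∈ S, ((1 / p : ℝ) * (1 / q) + if p = q then (1 / p : ℝ) else 0) := by
          refine Finset.sum_le_sum (fun p hp => Finset.sum_le_sum (fun q hq => ?_))
          exact cycAvg_count_mul_count_le (hS p hp).1 (hS q hq).1 (hS p hp).2
      _ = μ ^ 2 + μ := by
          simp_rw [Finset.sum_add_distrib]
          rw [← Finset.sum_mul_sum, ← hμ, sq]
          congr 1
          refine Finset.sum_congr rfl (fun p hp => ?_)
          rw [Finset.sum_ite_eq, if_pos hp]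
  have hV : cycAvg k (fun m => (M m - μ) ^ 2) ≤ μ := by
    have : (fun m => (M m - μ) ^ 2) = fun m => (M m * M m + (-(2 * μ)) * M m) + μ ^ 2 := by
      ext m; ring
    rw [this, cycAvg_add, cycAvg_add, cycAvg_const_mul, cycAvg_const, hM1]
    nlinarith
  have hfin : μ ^ 2 * cycAvg k (fun m => if ∃ p ∈ S, p ∈ m then 0 else 1) ≤ μ := by
    rw [← cycAvg_const_mul]
    refine (cycAvg_mono (fun σ => ?_)).trans hV
    split_ifs with h
    · rw [mul_zero]; positivity
    · have : M σ.cycleType = 0 := by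
        refine Finset.sum_eq_zero (fun p hp => ?_)
        rw [Multiset.count_eq_zero_of_notMem (fun hm => h ⟨p, hp, hm⟩)]
        simp
      rw [this]
      simp
  rw [le_div_iff₀ hpos]
  nlinarith

open Pointwise in
lemma pair_fix_count {G X : Type*} [Group G] [Finite G] [MulAction G X] (O : Set X) (N : ℕ)
    (hO : ∀ x ∈ O, ∀ y ∈ O, y ∈ orbit G x) (hN : ∀ x ∈ O, N ≤ Nat.card (orbit G x)) :
    Nat.card {gh : G × G // ∃ x ∈ O, gh.1 • x = x ∧ gh.2 • x = x} * N ≤ (Nat.card G) ^ 2 := by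
  classical
  rcases O.eq_empty_or_nonempty with rfl | ⟨x0, hx0⟩
  · simp
  have := Fintype.ofFinite G
  have hfo : Finite (orbit G x0) := Set.finite_range _
  have := Fintype.ofFinite (orbit G x0)
  let f : (Σ x : orbit G x0, stabilizer G (x : X) × stabilizer G (x : X)) → G × G :=
    fun y => (y.2.1, y.2.2)
  have h1 : Nat.card {gh : G × G // ∃ x ∈ O, gh.1 • x = x ∧ gh.2 • x = x}
      ≤ Nat.card (Σ x : orbit G x0, stabilizer G (x : X) × stabilizer G (x : X)) := by
    let ι : {gh : G × G // ∃ x ∈ O, gh.1 • x = x ∧ gh.2 • x = x} →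
        (Σ x : orbit G x0, stabilizer G (x : X) × stabilizer G (x : X)) := fun gh =>
      ⟨⟨gh.2.choose, hO x0 hx0 _ gh.2.choose_spec.1⟩,
        ⟨gh.1.1, gh.2.choose_spec.2.1⟩, ⟨gh.1.2, gh.2.choose_spec.2.2⟩⟩
    apply Nat.card_le_card_of_injective ι
    intro a b hab
    have : f (ι a) = f (ι b) := by rw [hab]
    exact Subtype.ext this
  set o := Nat.card (orbit G x0) with ho
  have h2 : ∀ x : orbit G x0, o * Nat.card (stabilizer G (x : X)) = Nat.card G := by
    intro x
    have : Finite (orbit G (x : X)) := Set.finite_range _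
    have := Fintype.ofFinite (orbit G (x : X))
    have := card_orbit_mul_card_stabilizer_eq_card_group G (x : X)
    rw [← Nat.card_eq_fintype_card, ← Nat.card_eq_fintype_card, ← Nat.card_eq_fintype_card,
      orbit_eq_iff.mpr x.2] at this
    exact this
  have h3 : Nat.card (Σ x : orbit G x0, stabilizer G (x : X) × stabilizer G (x : X)) * o
      = (Nat.card G) ^ 2 := by
    rw [Nat.card_sigma, Finset.sum_mul]
    simp_rw [Nat.card_prod]
    have opos : 0 < o := by
      have : Nonempty (orbit G x0) := ⟨⟨x0, mem_orbit_self x0⟩⟩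
      exact Nat.card_pos
    apply Nat.eq_of_mul_eq_mul_left opos
    rw [Finset.mul_sum]
    have : ∀ x : orbit G x0, o * (Nat.card (stabilizer G (x : X)) *
        Nat.card (stabilizer G (x : X)) * o) = (Nat.card G) ^ 2 := by
      intro x; rw [← h2 x]; ring
    rw [Finset.sum_congr rfl (fun x _ => this x), Finset.sum_const, Finset.card_univ,
      ← Nat.card_eq_fintype_card, smul_eq_mul]
  calc _ ≤ _ * o := Nat.mul_le_mul h1 (hN x0 hx0)
    _ = _ := h3

lemma exists_perm_image {k : ℕ} (S T : Finset (Fin k)) (h : S.card = T.card) :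
    ∃ π : Perm (Fin k), ∀ x, π x ∈ T ↔ x ∈ S := by
  classical
  have e : {x // x ∈ S} ≃ {x // x ∈ T} := Fintype.equivOfCardEq (by simpa using h)
  refine ⟨e.extendSubtype, fun x => ?_⟩
  constructor
  · intro hx
    by_contra hS
    exact e.extendSubtype_not_mem x hS hx
  · exact fun hx => e.extendSubtype_mem x hx

open Pointwise in
lemma bad_set_count (k i : ℕ) :
    Nat.card {gh : Perm (Fin k) × Perm (Fin k) //
      ∃ S ∈ {S : Finset (Fin k) | S.card = i}, gh.1 • S = S ∧ gh.2 • S = S} * k.choose i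
      ≤ (k.factorial) ^ 2 := by
  have key : ∀ S T : Finset (Fin k), S.card = i → T.card = i → T ∈ orbit (Perm (Fin k)) S := by
    intro S T hS hT
    obtain ⟨π, hπ⟩ := exists_perm_image S T (hS.trans hT.symm)
    refine ⟨π, ?_⟩
    ext x
    change x ∈ π • S ↔ x ∈ T
    rw [← Finset.inv_smul_mem_iff, ← hπ]
    simp
  have := pair_fix_count (G := Perm (Fin k)) {S : Finset (Fin k) | S.card = i} (k.choose i)
    (fun S hS T hT => key S T hS hT) (fun S hS => by
      have h1 : Nat.card (Finset.powersetCard i (Finset.univ : Finset (Fin k))) = k.choose i := by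
        rw [Nat.card_eq_fintype_card, Fintype.card_coe, Finset.card_powersetCard]
        simp
      rw [← h1]
      have : Finite (orbit (Perm (Fin k)) S) := Set.finite_range _
      apply Nat.card_le_card_of_injective (fun T => ⟨T.1, key S T hS
        (Finset.mem_powersetCard.mp T.2).2⟩)
      intro a b hab
      exact Subtype.ext (congrArg (fun z => z.1) hab))
  rwa [Nat.card_perm, Nat.card_fin] at this

/-- equivalence relations all of whose classes have `d` elements -/
def relSet (k d : ℕ) : Set (Set (Fin k × Fin k)) :=
  {R | ∃ f : Fin k → Set (Fin k), (∀ a, Nat.card {b // f b = f a} = d) ∧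
    R = {x | f x.1 = f x.2}}

lemma relSet_perm {k d : ℕ} (f f' : Fin k → Set (Fin k))
    (hf : ∀ a, Nat.card {b // f b = f a} = d) (hf' : ∀ a, Nat.card {b // f' b = f' a} = d) :
    ∃ π : Perm (Fin k), ∀ a b, f' (π a) = f' (π b) ↔ f a = f b := by
  classical
  rcases Nat.eq_zero_or_pos k with rfl | hk
  · exact ⟨1, fun a => a.elim0⟩
  have hd : 0 < d := by
    rw [← hf ⟨0, hk⟩]
    have : Nonempty {b // f b = f ⟨0, hk⟩} := ⟨⟨_, rfl⟩⟩
    exact Nat.card_pos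
  have hcard : ∀ g : Fin k → Set (Fin k), (∀ a, Nat.card {b // g b = g a} = d) →
      ∀ q : Set.range g, Nat.card {b // Set.rangeFactorization g b = q} = d := by
    rintro g hg ⟨_, a, rfl⟩
    rw [← hg a]
    apply Nat.card_congr
    exact Equiv.subtypeEquivRight (fun b => by simp [Set.rangeFactorization, Subtype.ext_iff])
  have hQ : ∀ g : Fin k → Set (Fin k), (∀ a, Nat.card {b // g b = g a} = d) →
      Nat.card (Set.range g) * d = k := by
    intro g hg
    have h1 := Nat.card_congr (Equiv.sigmaFiberEquiv (Set.rangeFactorization g))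
    have := Fintype.ofFinite (Set.range g)
    rw [Nat.card_sigma, Finset.sum_congr rfl (fun q _ => hcard g hg q)] at h1
    simp only [Finset.sum_const, Finset.card_univ, smul_eq_mul, Nat.card_fin] at h1
    rw [Nat.card_eq_fintype_card]; exact h1
  have e0 : Set.range f ≃ Set.range f' := by
    have : Nat.card (Set.range f) = Nat.card (Set.range f') :=
      Nat.eq_of_mul_eq_mul_right hd ((hQ f hf).trans (hQ f' hf').symm)
    exact (Finite.card_eq.mp this).some
  have e1 : ∀ q : Set.range f, {b // Set.rangeFactorization f b = q} ≃
      {b // Set.rangeFactorization f' b = e0 q} := fun q =>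
    (Finite.card_eq.mp ((hcard f hf q).trans (hcard f' hf' _).symm)).some
  let π : Perm (Fin k) := (Equiv.sigmaFiberEquiv (Set.rangeFactorization f)).symm.trans
    ((Equiv.sigmaCongr e0 e1).trans (Equiv.sigmaFiberEquiv (Set.rangeFactorization f')))
  have hπ : ∀ a, Set.rangeFactorization f' (π a) = e0 (Set.rangeFactorization f a) := by
    intro a
    exact (e1 (Set.rangeFactorization f a) ⟨a, rfl⟩).2
  have hr : ∀ (g : Fin k → Set (Fin k)) a b, g a = g b ↔
      Set.rangeFactorization g a = Set.rangeFactorization g b := fun g a b => by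
    simp [Set.rangeFactorization, Subtype.ext_iff]
  refine ⟨π, fun a b => ?_⟩
  rw [hr, hπ, hπ, e0.injective.eq_iff, ← hr]

open Pointwise in
lemma mem_smul_rel {k : ℕ} (π : Perm (Fin k)) (R : Set (Fin k × Fin k)) (a b : Fin k) :
    (π a, π b) ∈ π • R ↔ (a, b) ∈ R := by
  have : (π a, π b) = π • (a, b) := rfl
  rw [this, Set.smul_mem_smul_set_iff]

open Pointwise in
lemma smul_rel_eq {k : ℕ} (π : Perm (Fin k)) (R R' : Set (Fin k × Fin k))
    (h : ∀ a b, (π a, π b) ∈ R' ↔ (a, b) ∈ R) : π • R = R' := by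
  ext ⟨x, y⟩
  obtain ⟨a, rfl⟩ := π.surjective x
  obtain ⟨b, rfl⟩ := π.surjective y
  rw [mem_smul_rel, h]

open Pointwise in
lemma relSet_orbit {k d : ℕ} (R R' : Set (Fin k × Fin k)) (hR : R ∈ relSet k d)
    (hR' : R' ∈ relSet k d) : R' ∈ orbit (Perm (Fin k)) R := by
  obtain ⟨f, hf, rfl⟩ := hR
  obtain ⟨f', hf', rfl⟩ := hR'
  obtain ⟨π, hπ⟩ := relSet_perm f f' hf hf'
  exact ⟨π, smul_rel_eq π _ _ hπ⟩

open Pointwise in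
lemma relSet_orbit_card {k d : ℕ} (R : Set (Fin (k+1) × Fin (k+1))) (hR : R ∈ relSet (k+1) (d+1)) :
    k.choose d ≤ Nat.card (orbit (Perm (Fin (k+1))) R) := by
  classical
  obtain ⟨f, hf, rfl⟩ := hR
  set R : Set (Fin (k+1) × Fin (k+1)) := {x | f x.1 = f x.2} with hRd
  have hfin : Finite (orbit (Perm (Fin (k+1))) R) := Set.finite_range _
  let U := Finset.powersetCard d ((Finset.univ : Finset (Fin (k+1))).erase 0)
  have h1 : Nat.card U = k.choose d := by
    rw [Nat.card_eq_fintype_card, Fintype.card_coe, Finset.card_powersetCard]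
    simp
  rw [← h1]
  have key : ∀ T : U, ∃ R' : orbit (Perm (Fin (k+1))) R, ∀ b, (0, b) ∈ R'.1 ↔ b ∈ insert 0 T.1 := by
    rintro ⟨T, hT⟩
    have hT' := Finset.mem_powersetCard.mp hT
    have h0 : (0 : Fin (k+1)) ∉ T := fun h => by simpa using hT'.1 h
    obtain ⟨π, hπ⟩ := exists_perm_image (Finset.univ.filter (fun b => f b = f 0)) (insert 0 T) (by
      rw [Finset.card_insert_of_notMem h0, hT'.2, ← hf 0, Nat.card_eq_fintype_card,
        Fintype.card_subtype])
    refine ⟨⟨π • R, mem_orbit _ _⟩, fun b => ?_⟩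
    obtain ⟨b, rfl⟩ := π.surjective b
    obtain ⟨z, hz⟩ := π.surjective 0
    have h2 : f z = f 0 := by
      have := (hπ z).mp (by rw [hz]; simp)
      simpa using this
    rw [hπ]
    change (0, π b) ∈ π • R ↔ _
    nth_rewrite 1 [← hz]
    rw [mem_smul_rel]
    simp only [hRd, Set.mem_ofPred_eq, Finset.mem_filter, Finset.mem_univ, true_and]
    rw [h2, eq_comm]
  choose F hF using key
  apply Nat.card_le_card_of_injective F
  intro T T' hTT
  have h0 : ∀ T : U, (0 : Fin (k+1)) ∉ T.1 := fun T h => by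
    simpa using (Finset.mem_powersetCard.mp T.2).1 h
  apply Subtype.ext
  have : insert 0 T.1 = insert 0 T'.1 := by
    ext b
    rw [← hF, ← hF, hTT]
  rw [← Finset.erase_insert (h0 T), this, Finset.erase_insert (h0 T')]

open Pointwise in
lemma bad_rel_count (k d : ℕ) :
    Nat.card {gh : Perm (Fin (k+1)) × Perm (Fin (k+1)) //
      ∃ R ∈ relSet (k+1) (d+1), gh.1 • R = R ∧ gh.2 • R = R} * k.choose d
      ≤ ((k+1).factorial) ^ 2 := by
  have := pair_fix_count (G := Perm (Fin (k+1))) (relSet (k+1) (d+1)) (k.choose d)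
    (fun S hS T hT => relSet_orbit S T hS hT) (fun S hS => relSet_orbit_card S hS)
  rwa [Nat.card_perm, Nat.card_fin] at this

open Pointwise in
lemma not_preprim {k : ℕ} (g h : Perm (Fin k))
    (hn : ¬ IsPreprimitive (Subgroup.closure {g, h}) (Fin k)) :
    (∃ i ∈ Finset.Icc 1 (k-1), ∃ S ∈ {S : Finset (Fin k) | S.card = i}, g • S = S ∧ h • S = S) ∨
    (∃ d ∈ Finset.Icc 2 (k-1), ∃ R ∈ relSet k d, g • R = R ∧ h • R = R) := by
  classical
  set H := Subgroup.closure {g, h} with hH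
  have hgH : g ∈ H := Subgroup.subset_closure (by simp)
  have hhH : h ∈ H := Subgroup.subset_closure (by simp)
  by_cases ht : IsPretransitive H (Fin k)
  · right
    have : ∃ B : Set (Fin k), IsBlock H B ∧ ¬ IsTrivialBlock B := by
      by_contra! hc
      exact hn ⟨fun {B} hB => hc B hB⟩
    obtain ⟨B, hB, hBt⟩ := this
    unfold IsTrivialBlock at hBt
    push Not at hBt
    obtain ⟨hB1, hB2⟩ := hBt
    obtain ⟨b0, hb0⟩ := hB1.nonempty
    have hex : ∀ a : Fin k, ∃ x : H, x • b0 = a := fun a => exists_smul_eq H b0 a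
    choose t ht using hex
    let f : Fin k → Set (Fin k) := fun a => t a • B
    have hfa : ∀ a, a ∈ f a := fun a => by
      have := Set.smul_mem_smul_set (a := t a) hb0
      rwa [ht] at this
    have hblk : ∀ (x y : H) (z : Fin k), z ∈ x • B → z ∈ y • B → x • B = y • B := by
      intro x y z hx hy
      by_contra hne
      exact Set.disjoint_left.mp (hB hne) hx hy
    have hfx : ∀ (x : H) (a : Fin k), f (x • a) = x • f a := by
      intro x a
      have h1 : x • f a = (x * t a) • B := by rw [mul_smul]
      rw [h1]
      apply hblk _ _ (x • a) (hfa _)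
      rw [← h1]
      exact Set.smul_mem_smul_set (hfa a)
    have hfib : ∀ a b, f b = f a ↔ b ∈ f a := by
      intro a b
      constructor
      · intro h; rw [← h]; exact hfa b
      · intro h; exact hblk _ _ b (hfa b) h
    have hR : ∀ x : H, (x : Perm (Fin k)) • ({x | f x.1 = f x.2} : Set (Fin k × Fin k)) =
        {x | f x.1 = f x.2} := by
      intro x
      apply smul_rel_eq
      intro a b
      change f (x • a) = f (x • b) ↔ f a = f b
      rw [hfx, hfx, smul_left_cancel_iff]
    refine ⟨Nat.card B, ?_, {x | f x.1 = f x.2}, ⟨f, ?_, rfl⟩, hR ⟨g, hgH⟩, hR ⟨h, hhH⟩⟩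
    · rw [Finset.mem_Icc]
      have h1 : 1 < Nat.card B := by
        rw [Finite.one_lt_card_iff_nontrivial]
        exact hB1.coe_sort
      have h2 : Nat.card B < k := by
        have := Set.ncard_lt_card hB2
        rw [Nat.card_fin] at this
        exact this
      omega
    · intro a
      have : Nat.card {b // f b = f a} = Nat.card (f a) :=
        Nat.card_congr (Equiv.subtypeEquivRight (hfib a))
      rw [this]
      exact Set.ncard_smul_set (t a) B
  · left
    have : ∃ a b : Fin k, b ∉ orbit H a := by
      by_contra! hc
      exact ht ⟨fun a b => hc a b⟩
    obtain ⟨a, b, hab⟩ := this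
    have hS : ∀ x : H, (x : Perm (Fin k)) • (Finset.univ.filter (· ∈ orbit H a)) =
        Finset.univ.filter (· ∈ orbit H a) := by
      intro x
      ext z
      rw [← Finset.inv_smul_mem_iff]
      simp only [Finset.mem_filter, Finset.mem_univ, true_and]
      change x⁻¹ • z ∈ orbit H a ↔ _
      rw [← orbit_eq_iff, ← orbit_eq_iff, orbit_smul]
    refine ⟨_, ?_, Finset.univ.filter (· ∈ orbit H a), rfl, hS ⟨g, hgH⟩, hS ⟨h, hhH⟩⟩
    rw [Finset.mem_Icc]
    have h1 : 0 < (Finset.univ.filter (· ∈ orbit H a)).card :=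
      Finset.card_pos.mpr ⟨a, by simp⟩
    have h2 : (Finset.univ.filter (· ∈ orbit H a)).card < k := by
      conv_rhs => rw [← Fintype.card_fin k]
      rw [← Finset.card_univ]
      apply Finset.card_lt_card
      rw [Finset.ssubset_univ_iff]
      intro h
      have := Finset.mem_univ b
      rw [← h] at this
      simp only [Finset.mem_filter, Finset.mem_univ, true_and] at this
      exact hab this
    omega

/-- sum of inverse binomials -/
noncomputable def invChoose (k : ℕ) : ℝ := ∑ i ∈ Finset.Icc 1 (k-1), 1 / (k.choose i : ℝ)

open Pointwise in
lemma not_preprim_count (k : ℕ) :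
    (Nat.card {gh : Perm (Fin (k+1)) × Perm (Fin (k+1)) //
      ¬ IsPreprimitive (Subgroup.closure {gh.1, gh.2}) (Fin (k+1))} : ℝ) / ((k+1).factorial : ℝ)^2
      ≤ invChoose (k+1) + invChoose k := by
  classical
  set F : ℝ := ((k+1).factorial : ℝ)^2 with hF
  have hFpos : 0 < F := by positivity
  let E1 : ℕ → Finset (Perm (Fin (k+1)) × Perm (Fin (k+1))) := fun i =>
    Finset.univ.filter (fun gh => ∃ S ∈ {S : Finset (Fin (k+1)) | S.card = i},
      gh.1 • S = S ∧ gh.2 • S = S)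
  let E2 : ℕ → Finset (Perm (Fin (k+1)) × Perm (Fin (k+1))) := fun d =>
    Finset.univ.filter (fun gh => ∃ R ∈ relSet (k+1) (d+1), gh.1 • R = R ∧ gh.2 • R = R)
  have h1 : ∀ i ∈ Finset.Icc 1 (k+1-1), ((E1 i).card : ℝ) ≤ F * (1 / ((k+1).choose i : ℝ)) := by
    intro i hi
    have := bad_set_count (k+1) i
    rw [Nat.card_eq_fintype_card, Fintype.card_subtype] at this
    have hpos : 0 < (k+1).choose i := Nat.choose_pos (by simp at hi; omega)
    rw [mul_one_div, le_div_iff₀ (by exact_mod_cast hpos)]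
    rw [hF]
    exact_mod_cast this
  have h2 : ∀ i ∈ Finset.Icc 1 (k-1), ((E2 i).card : ℝ) ≤ F * (1 / (k.choose i : ℝ)) := by
    intro i hi
    have := bad_rel_count k i
    rw [Nat.card_eq_fintype_card, Fintype.card_subtype] at this
    have hpos : 0 < k.choose i := Nat.choose_pos (by simp at hi; omega)
    rw [mul_one_div, le_div_iff₀ (by exact_mod_cast hpos)]
    rw [hF]
    exact_mod_cast this
  rw [Nat.card_eq_fintype_card, Fintype.card_subtype, div_le_iff₀ hFpos]
  have hsub : (Finset.univ.filter (fun gh : Perm (Fin (k+1)) × Perm (Fin (k+1)) =>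
      ¬ IsPreprimitive (Subgroup.closure {gh.1, gh.2}) (Fin (k+1)))) ⊆
      (Finset.Icc 1 (k+1-1)).biUnion E1 ∪ (Finset.Icc 1 (k-1)).biUnion E2 := by
    intro gh hgh
    simp only [Finset.mem_filter, Finset.mem_univ, true_and] at hgh
    rw [Finset.mem_union, Finset.mem_biUnion, Finset.mem_biUnion]
    rcases not_preprim gh.1 gh.2 hgh with ⟨i, hi, h⟩ | ⟨d, hd, h⟩
    · left; exact ⟨i, hi, by simpa [E1] using h⟩
    · right
      rw [Finset.mem_Icc] at hd
      obtain ⟨e, rfl⟩ : ∃ e, d = e + 1 := ⟨d - 1, by omega⟩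
      refine ⟨e, by rw [Finset.mem_Icc]; omega, ?_⟩
      rw [Finset.mem_filter]
      exact ⟨Finset.mem_univ _, h⟩
  have h3 := (Finset.card_le_card hsub).trans (Finset.card_union_le _ _)
  have h4 : (((Finset.Icc 1 (k+1-1)).biUnion E1).card : ℝ) ≤ F * invChoose (k+1) := by
    have := Finset.card_biUnion_le (s := Finset.Icc 1 (k+1-1)) (t := E1)
    calc _ ≤ ((∑ i ∈ Finset.Icc 1 (k+1-1), (E1 i).card : ℕ) : ℝ) := by exact_mod_cast this
      _ ≤ _ := by
        push_cast
        rw [invChoose, Finset.mul_sum]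
        exact Finset.sum_le_sum h1
  have h5 : (((Finset.Icc 1 (k-1)).biUnion E2).card : ℝ) ≤ F * invChoose k := by
    have := Finset.card_biUnion_le (s := Finset.Icc 1 (k-1)) (t := E2)
    calc _ ≤ ((∑ i ∈ Finset.Icc 1 (k-1), (E2 i).card : ℕ) : ℝ) := by exact_mod_cast this
      _ ≤ _ := by
        push_cast
        rw [invChoose, Finset.mul_sum]
        exact Finset.sum_le_sum h2
  have h6 : ((Finset.univ.filter (fun gh : Perm (Fin (k+1)) × Perm (Fin (k+1)) =>
      ¬ IsPreprimitive (Subgroup.closure {gh.1, gh.2}) (Fin (k+1)))).card : ℝ) ≤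
      (((Finset.Icc 1 (k+1-1)).biUnion E1).card : ℝ) +
      (((Finset.Icc 1 (k-1)).biUnion E2).card : ℝ) := by exact_mod_cast h3
  nlinarith

lemma choose_two_le (k i : ℕ) (h2 : 2 ≤ i) (hi : i + 2 ≤ k) : k.choose 2 ≤ k.choose i := by
  induction k generalizing i with
  | zero => omega
  | succ k ih =>
    rcases Nat.lt_or_ge k (i + 2) with h | h
    · obtain rfl : k = i + 1 := by omega
      rw [← Nat.choose_symm_of_eq_add (show i + 1 + 1 = i + 2 by ring)]
    · obtain ⟨j, rfl⟩ : ∃ j, i = j + 1 := ⟨i - 1, by omega⟩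
      rw [Nat.choose_succ_succ' k j, Nat.choose_succ_succ' k 1]
      have a := ih (j+1) h2 h
      have b : k.choose 1 ≤ k.choose j := by
        rcases Nat.lt_or_ge j 2 with hj | hj
        · obtain rfl : j = 1 := by omega
          exact le_rfl
        · refine le_trans ?_ (ih j hj (by omega))
          rw [Nat.choose_one_right, Nat.choose_two_right]
          rw [Nat.le_div_iff_mul_le (by norm_num)]
          exact Nat.mul_le_mul_left k (by omega)
      exact Nat.add_le_add b a

lemma invChoose_le (k : ℕ) (hk : 4 ≤ k) : invChoose k ≤ 4 / (k - 1 : ℝ) := by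
  have hk' : (4:ℝ) ≤ k := by exact_mod_cast hk
  have hb : ∀ i ∈ Finset.Icc 1 (k-1), 1 / (k.choose i : ℝ) ≤
      (if i = 1 then 1 / (k:ℝ) else 0) + (if i = k - 1 then 1 / (k:ℝ) else 0)
        + 2 / ((k:ℝ) * (k-1)) := by
    intro i hi
    rw [Finset.mem_Icc] at hi
    have hp : 0 ≤ 2 / ((k:ℝ) * (k-1)) := by
      apply div_nonneg (by norm_num); nlinarith
    have hp2 : 0 ≤ 1 / (k:ℝ) := by positivity
    by_cases h1 : i = 1
    · subst h1
      simp only [if_true, Nat.choose_one_right]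
      split_ifs <;> linarith
    by_cases h2 : i = k - 1
    · have : k.choose i = k := by
        rw [h2, ← Nat.choose_symm_of_eq_add (show k = 1 + (k-1) by omega), Nat.choose_one_right]
      rw [this, if_neg h1, if_pos h2]; linarith
    · rw [if_neg h1, if_neg h2, zero_add, zero_add]
      have h3 := choose_two_le k i (by omega) (by omega)
      have h4 : (k.choose 2 : ℝ) = k * (k-1) / 2 := Nat.cast_choose_two ℝ k
      have h5 : (k.choose 2 : ℝ) ≤ k.choose i := by exact_mod_cast h3
      rw [h4] at h5
      have h6 : (0:ℝ) < k * (k-1) := by nlinarith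
      calc 1 / (k.choose i : ℝ) ≤ 1 / (k * (k-1) / 2) := by gcongr
        _ = _ := by field_simp
  unfold invChoose
  refine (Finset.sum_le_sum hb).trans ?_
  rw [Finset.sum_add_distrib, Finset.sum_add_distrib, Finset.sum_ite_eq', Finset.sum_ite_eq',
    Finset.sum_const, if_pos (by simp; omega), if_pos (by simp; omega)]
  simp only [Nat.card_Icc, nsmul_eq_mul]
  rw [show k - 1 + 1 - 1 = k - 1 by omega, Nat.cast_sub (by omega), Nat.cast_one]
  have h6 : (0:ℝ) < k - 1 := by linarith
  rw [show ((k:ℝ) - 1) * (2 / (k * (k-1))) = 2 / k by field_simp]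
  rw [show 1 / (k:ℝ) + 1 / k + 2 / k = 4 / k by field_simp; norm_num]
  gcongr
  linarith

lemma invChoose_tendsto : Filter.Tendsto invChoose Filter.atTop (nhds 0) := by
  have h : Filter.Tendsto (fun k : ℕ => 4 / ((k:ℝ) - 1)) Filter.atTop (nhds 0) := by
    apply Filter.Tendsto.div_atTop tendsto_const_nhds
    exact Filter.tendsto_atTop_add_const_right _ _ tendsto_natCast_atTop_atTop
  refine squeeze_zero' (Filter.Eventually.of_forall fun k => ?_)
    ((Filter.eventually_ge_atTop 4).mono fun k hk => invChoose_le k hk) h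
  unfold invChoose
  positivity

open Filter in
lemma theta_lower : ∀ᶠ n : ℕ in atTop, (2/5 : ℝ) * n ≤ Chebyshev.theta n := by
  have h1 := (isLittleO_log_rpow_atTop (show (0:ℝ) < 1/2 by norm_num)).bound
    (show (0:ℝ) < 1/16 by norm_num)
  have h2 : ∀ᶠ x : ℝ in atTop, Real.log x ≤ 1/16 * √x := by
    filter_upwards [h1, eventually_ge_atTop 1] with x hx hx1
    rw [← Real.sqrt_eq_rpow, Real.norm_of_nonneg (Real.log_nonneg hx1),
      Real.norm_of_nonneg (Real.sqrt_nonneg _)] at hx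
    exact hx
  have h3 : ∀ᶠ n : ℕ in atTop, Real.log (n:ℝ) ≤ 1/16 * √(n:ℝ) :=
    tendsto_natCast_atTop_atTop.eventually h2
  have h4 : ∀ᶠ n : ℕ in atTop, Real.log ((n:ℝ) + 1) ≤ 1/16 * √((n:ℝ) + 1) :=
    (tendsto_atTop_add_const_right _ _ tendsto_natCast_atTop_atTop).eventually h2
  filter_upwards [h3, h4, eventually_ge_atTop 1] with n hn hn1 hn2
  have h5 := Chebyshev.theta_ge n
  have hl := Real.log_two_gt_d9
  have hn2' : (1:ℝ) ≤ n := by exact_mod_cast hn2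
  have h6 : √(n:ℝ) * √(n:ℝ) = n := Real.mul_self_sqrt (by linarith)
  have h7 : √((n:ℝ)+1) ≤ n + 1 := by
    rw [Real.sqrt_le_left (by linarith)]; nlinarith
  have h8 : √(n:ℝ) * Real.log n ≤ √(n:ℝ) * (1/16 * √(n:ℝ)) := by gcongr
  nlinarith

/-- primes in a block -/
def primesIoc (a b : ℕ) : Finset ℕ := (Finset.Ioc a b).filter Nat.Prime

lemma theta_sub {a b : ℕ} (hab : a ≤ b) :
    Chebyshev.theta b - Chebyshev.theta a = ∑ p ∈ primesIoc a b, Real.log p := by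
  unfold Chebyshev.theta primesIoc
  simp only [Nat.floor_natCast]
  rw [sub_eq_iff_eq_add, add_comm, ← Finset.sum_union]
  · rw [← Finset.filter_union, Finset.Ioc_union_Ioc_eq_Ioc (by omega) hab]
  · apply Finset.disjoint_filter_filter
    rw [Finset.disjoint_left]
    intro x hx hy
    simp at hx hy; omega

open Filter in
lemma block_sum : ∀ᶠ j : ℕ in atTop,
    (1/48 : ℝ) * (1/((j:ℝ)+1)) ≤ ∑ p ∈ primesIoc (16^j) (16^(j+1)), (1/(p:ℝ)) := by
  have ht : Tendsto (fun j : ℕ => 16^(j+1)) atTop atTop :=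
    (tendsto_pow_atTop_atTop_of_one_lt (by norm_num : 1 < 16)).comp (tendsto_add_atTop_nat 1)
  filter_upwards [ht.eventually theta_lower] with j hj
  have h1 : Chebyshev.theta ((16^j : ℕ) : ℝ) ≤ Real.log 4 * ((16^j : ℕ):ℝ) :=
    Chebyshev.theta_le_log4_mul_x (by positivity)
  have h2 := theta_sub (show 16^j ≤ 16^(j+1) from Nat.pow_le_pow_right (by norm_num) (by omega))
  have hl4 : Real.log 4 = 2 * Real.log 2 := by
    rw [show (4:ℝ) = 2^2 by norm_num, Real.log_pow]; norm_num
  have hl16 : Real.log 16 = 4 * Real.log 2 := by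
    rw [show (16:ℝ) = 2^4 by norm_num, Real.log_pow]; norm_num
  have hl := Real.log_two_lt_d9
  have hl' := Real.log_two_gt_d9
  set M : ℝ := (16:ℝ)^j with hM
  have hMpos : 0 < M := by positivity
  have h3 : M ≤ ∑ p ∈ primesIoc (16^j) (16^(j+1)), Real.log p := by
    rw [← h2]
    push_cast at hj h1 ⊢
    rw [pow_succ] at hj ⊢
    rw [hl4] at h1
    nlinarith
  have h4 : ∀ p ∈ primesIoc (16^j) (16^(j+1)), Real.log p ≤
      (M * 48 * ((j:ℝ)+1)) * (1/(p:ℝ)) := by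
    intro p hp
    simp only [primesIoc, Finset.mem_filter, Finset.mem_Ioc] at hp
    have hp0 : (0:ℝ) < p := by exact_mod_cast hp.2.pos
    have hpb : (p:ℝ) ≤ 16^(j+1) := by exact_mod_cast hp.1.2
    have h5 : Real.log p ≤ 3 * ((j:ℝ)+1) := by
      calc Real.log p ≤ Real.log (16^(j+1)) := Real.log_le_log hp0 hpb
        _ = ((j:ℝ)+1) * (4 * Real.log 2) := by rw [Real.log_pow, hl16]; push_cast; ring
        _ ≤ _ := by
          have : (0:ℝ) ≤ j := by positivity
          nlinarith
    have h6 : (p:ℝ) ≤ 16 * M := by rw [hM]; rw [pow_succ] at hpb; linarith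
    rw [mul_one_div, le_div_iff₀ hp0]
    calc Real.log p * p ≤ (3 * ((j:ℝ)+1)) * (16 * M) := by gcongr
      _ = _ := by ring
  have h5 := h3.trans (Finset.sum_le_sum h4)
  rw [← Finset.mul_sum] at h5
  set S := ∑ p ∈ primesIoc (16^j) (16^(j+1)), (1/(p:ℝ)) with hS
  have hj1 : (0:ℝ) < (j:ℝ)+1 := by positivity
  have h6 : 1 ≤ 48 * ((j:ℝ)+1) * S := by
    have : M * 1 ≤ M * (48 * ((j:ℝ)+1) * S) := by linarith
    exact le_of_mul_le_mul_left this hMpos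
  rw [mul_one_div, div_le_iff₀ hj1]
  linarith

lemma primesIoc_sum {s J : ℕ} (h : s ≤ J) (F : ℕ → ℝ) :
    ∑ p ∈ primesIoc (16^s) (16^J), F p =
      ∑ j ∈ Finset.Ico s J, ∑ p ∈ primesIoc (16^j) (16^(j+1)), F p := by
  induction J, h using Nat.le_induction with
  | base => simp [primesIoc]
  | succ J hJ ih =>
    rw [Finset.sum_Ico_succ_top hJ, ← ih, ← Finset.sum_union]
    · congr 1
      unfold primesIoc
      rw [← Finset.filter_union, Finset.Ioc_union_Ioc_eq_Ioc
        (Nat.pow_le_pow_right (by norm_num) hJ) (Nat.pow_le_pow_right (by norm_num) (by omega))]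
    · apply Finset.disjoint_filter_filter
      rw [Finset.disjoint_left]
      intro x hx hy
      simp at hx hy; omega

open Filter in
lemma sum_primes_tendsto : Tendsto (fun J : ℕ =>
    ∑ p ∈ primesIoc (16^(Nat.sqrt J)) (16^J), (1/(p:ℝ))) atTop atTop := by
  obtain ⟨j1, hj1⟩ := eventually_atTop.mp block_sum
  have hlog : Tendsto (fun J : ℕ => (1/48 : ℝ) * (1/2 * Real.log J - 1)) atTop atTop := by
    apply Tendsto.const_mul_atTop (by norm_num)
    apply tendsto_atTop_add_const_right
    apply Tendsto.const_mul_atTop (by norm_num)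
    exact Real.tendsto_log_atTop.comp tendsto_natCast_atTop_atTop
  apply tendsto_atTop_mono' _ _ hlog
  filter_upwards [eventually_ge_atTop (j1^2), eventually_ge_atTop 1] with J hJ hJ1
  have hs : j1 ≤ Nat.sqrt J := by rw [Nat.le_sqrt, ← sq]; exact hJ
  have hsJ : Nat.sqrt J ≤ J := Nat.sqrt_le_self J
  rw [primesIoc_sum hsJ]
  have h1 : ∑ j ∈ Finset.Ico (Nat.sqrt J) J, (1/48 : ℝ) * (1/((j:ℝ)+1)) ≤
      ∑ j ∈ Finset.Ico (Nat.sqrt J) J, ∑ p ∈ primesIoc (16^j) (16^(j+1)), (1/(p:ℝ)) :=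
    Finset.sum_le_sum fun j hj => hj1 j (hs.trans (Finset.mem_Ico.mp hj).1)
  refine le_trans ?_ h1
  rw [← Finset.mul_sum]
  apply mul_le_mul_of_nonneg_left _ (by norm_num)
  rw [Finset.sum_Ico_eq_sub _ hsJ]
  have hh : ∀ n : ℕ, ∑ j ∈ Finset.range n, 1/((j:ℝ)+1) = ((harmonic n : ℚ) : ℝ) := by
    intro n; simp [harmonic]
  rw [hh, hh]
  have a := log_add_one_le_harmonic J
  have b := harmonic_le_one_add_log (Nat.sqrt J)
  have hJp : (0:ℝ) < J := by exact_mod_cast hJ1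
  have c : Real.log J ≤ Real.log ((J + 1 : ℕ) : ℝ) := by
    apply Real.log_le_log hJp; push_cast; linarith
  have hsp : 0 < Nat.sqrt J := Nat.sqrt_pos.mpr hJ1
  have d : 2 * Real.log (Nat.sqrt J) ≤ Real.log J := by
    have : 2 * Real.log (Nat.sqrt J) = Real.log ((Nat.sqrt J : ℝ)^2) := by
      rw [Real.log_pow]; norm_num
    rw [this]
    apply Real.log_le_log (by positivity)
    exact_mod_cast Nat.sqrt_le' J
  linarith

lemma harm_le (k J : ℕ) (h : k ≤ 16^(J+2)) (hk : 0 < k) : harm k ≤ 7 + 3 * J := by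
  have h1 : harm k = ((harmonic k : ℚ) : ℝ) := by
    simp [harm, harmonic_eq_sum_Icc]
  rw [h1]
  refine (harmonic_le_one_add_log k).trans ?_
  have hl16 : Real.log 16 = 4 * Real.log 2 := by
    rw [show (16:ℝ) = 2^4 by norm_num, Real.log_pow]; norm_num
  have hl := Real.log_two_lt_d9
  have : Real.log k ≤ (J + 2) * (4 * Real.log 2) := by
    calc Real.log k ≤ Real.log (16^(J+2)) := by
          apply Real.log_le_log (by exact_mod_cast hk)
          exact_mod_cast h
      _ = _ := by rw [Real.log_pow, hl16]; push_cast; ring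
  have hJ : (0:ℝ) ≤ J := by positivity
  nlinarith

open Filter in
lemma exists_primes : ∃ P : ℕ → Finset ℕ,
    (∀ᶠ k in atTop, ∀ p ∈ P k, p.Prime ∧ 3 ≤ p ∧ 2 * p ≤ k) ∧
    Tendsto (fun k => ∑ p ∈ P k, (1/(p:ℝ))) atTop atTop ∧
    Tendsto (fun k => harm k * ∑ p ∈ P k, (1/(p:ℝ)^2)) atTop (nhds 0) := by
  have hJt : Tendsto (fun k : ℕ => Nat.log 16 (k/2)) atTop atTop := by
    apply Monotone.tendsto_atTop_atTop
    · intro a b hab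
      exact Nat.log_mono_right (Nat.div_le_div_right hab)
    · intro b
      exact ⟨2 * 16^b, by rw [Nat.mul_div_cancel_left _ (by norm_num), Nat.log_pow (by norm_num)]⟩
  have hst : Tendsto Nat.sqrt atTop atTop := by
    apply Monotone.tendsto_atTop_atTop
    · intro a b hab
      exact Nat.sqrt_le_sqrt hab
    · intro b
      exact ⟨b * b, by rw [Nat.sqrt_eq]⟩
  refine ⟨fun k => primesIoc (16^(Nat.sqrt (Nat.log 16 (k/2)))) (16^(Nat.log 16 (k/2))),
    ?_, sum_primes_tendsto.comp hJt, ?_⟩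
  · filter_upwards [eventually_ge_atTop 2, (hst.comp hJt).eventually_ge_atTop 1] with k hk hs p hp
    simp only [primesIoc, Finset.mem_filter, Finset.mem_Ioc] at hp
    have h1 : 16^(Nat.log 16 (k/2)) ≤ k/2 := Nat.pow_log_le_self 16 (by omega)
    have h2 : 16^1 ≤ 16^(Nat.sqrt (Nat.log 16 (k/2))) := Nat.pow_le_pow_right (by norm_num) hs
    refine ⟨hp.2, by omega, by omega⟩
  · have hlim : Tendsto (fun s : ℕ => (7 + 3 * ((s:ℝ)+1)^2) / (16:ℝ)^s) atTop (nhds 0) := by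
      have a := tendsto_pow_const_div_const_pow_of_one_lt 2 (show (1:ℝ) < 16 by norm_num)
      have b := tendsto_pow_const_div_const_pow_of_one_lt 1 (show (1:ℝ) < 16 by norm_num)
      have c := tendsto_pow_const_div_const_pow_of_one_lt 0 (show (1:ℝ) < 16 by norm_num)
      have := ((a.const_mul 3).add (b.const_mul 6)).add (c.const_mul 10)
      simp only [mul_zero, add_zero] at this
      refine this.congr fun s => ?_
      field_simp
      ring
    refine squeeze_zero' (Eventually.of_forall fun k => ?_) ?_ (hlim.comp (hst.comp hJt))
    · unfold harm; positivity
    · filter_upwards [eventually_ge_atTop 2] with k hk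
      set J := Nat.log 16 (k/2) with hJ
      set s := Nat.sqrt J with hs
      have h1 : harm k ≤ 7 + 3 * J := by
        apply harm_le k J _ (by omega)
        have : k/2 < 16^(J+1) := Nat.lt_pow_succ_log_self (by norm_num) _
        rw [pow_succ]; omega
      have h2 : (J:ℝ) ≤ ((s:ℝ)+1)^2 := by
        have : J < (s+1) * (s+1) := Nat.lt_succ_sqrt J
        have h' : J ≤ (s+1)^2 := by rw [sq]; omega
        exact_mod_cast h'
      have h3 : ∑ p ∈ primesIoc (16^s) (16^J), (1/(p:ℝ)^2) ≤ 1 / (16:ℝ)^s := by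
        have hsJ : 16^s ≤ 16^J := Nat.pow_le_pow_right (by norm_num) (Nat.sqrt_le_self J)
        have := sum_Ioc_inv_sq_le_sub (α := ℝ) (show 16^s ≠ 0 by positivity) hsJ
        calc _ ≤ ∑ p ∈ Finset.Ioc ((16:ℕ)^s) ((16:ℕ)^J), (1/(p:ℝ)^2) :=
              Finset.sum_le_sum_of_subset_of_nonneg (Finset.filter_subset _ _)
                (fun _ _ _ => by positivity)
          _ = ∑ p ∈ Finset.Ioc ((16:ℕ)^s) ((16:ℕ)^J), ((p:ℝ)^2)⁻¹ := by simp
          _ ≤ _ := this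
          _ ≤ _ := by
            push_cast
            rw [one_div]
            have : (0:ℝ) ≤ ((16:ℝ)^J)⁻¹ := by positivity
            linarith
      change _ ≤ (7 + 3 * ((s:ℝ)+1)^2) / (16:ℝ)^s
      rw [div_eq_mul_one_div]
      have h4 : harm k ≤ 7 + 3 * ((s:ℝ)+1)^2 := by linarith
      apply mul_le_mul h4 h3 (by positivity) (by positivity)

lemma avg_surj {Ω G' : Type*} [Group Ω] [Fintype Ω] [Group G'] [Fintype G']
    (f : Ω →* G') (hf : Function.Surjective f) (F : G' → ℝ) :
    (∑ x, F (f x)) / (Fintype.card Ω : ℝ) = (∑ y, F y) / (Fintype.card G' : ℝ) := by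
  classical
  set c := (Finset.univ.filter (fun g => f g = 1)).card with hc
  have hfib : ∀ y, (Finset.univ.filter (fun g => f g = y)).card = c := fun y =>
    MonoidHom.card_fiber_eq_of_mem_range f (hf y) (hf 1)
  have hsum : ∀ F : G' → ℝ, ∑ x, F (f x) = c * ∑ y, F y := by
    intro F
    rw [← Finset.sum_fiberwise (s := Finset.univ) (g := f), Finset.mul_sum]
    apply Finset.sum_congr rfl
    intro y _
    rw [Finset.sum_congr rfl (g := fun _ => F y) (fun x hx => by
      rw [(Finset.mem_filter.mp hx).2]), Finset.sum_const, hfib, nsmul_eq_mul]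
  have hcard : (Fintype.card Ω : ℝ) = c * Fintype.card G' := by
    have := hsum (fun _ => 1)
    simpa using this
  have hcpos : (c : ℝ) ≠ 0 := by
    intro h
    rw [h, zero_mul] at hcard
    have : Fintype.card Ω ≠ 0 := Fintype.card_ne_zero
    exact this (by exact_mod_cast hcard)
  rw [hsum, hcard, mul_div_mul_left _ _ hcpos]

/-- average over tuples -/
noncomputable def tupAvg (n k : ℕ) (F : (Fin n → Perm (Fin k)) → ℝ) : ℝ :=
  (∑ σ, F σ) / (k.factorial : ℝ) ^ n

lemma tupAvg_add {n k : ℕ} (F G : (Fin n → Perm (Fin k)) → ℝ) :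
    tupAvg n k (fun σ => F σ + G σ) = tupAvg n k F + tupAvg n k G := by
  unfold tupAvg
  rw [Finset.sum_add_distrib, add_div]

lemma tupAvg_sum {n k : ℕ} {ι : Type*} (s : Finset ι) (F : ι → (Fin n → Perm (Fin k)) → ℝ) :
    tupAvg n k (fun σ => ∑ i ∈ s, F i σ) = ∑ i ∈ s, tupAvg n k (F i) := by
  unfold tupAvg
  rw [Finset.sum_comm, Finset.sum_div]

lemma tupAvg_mono {n k : ℕ} {F G : (Fin n → Perm (Fin k)) → ℝ} (h : ∀ σ, F σ ≤ G σ) :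
    tupAvg n k F ≤ tupAvg n k G := by
  unfold tupAvg
  gcongr with σ
  exact h σ

lemma card_tup (n k : ℕ) : (Fintype.card (Fin n → Perm (Fin k)) : ℝ) = (k.factorial : ℝ) ^ n := by
  rw [Fintype.card_fun, Fintype.card_perm, Fintype.card_fin, Fintype.card_fin]
  push_cast; rfl

lemma tupAvg_one {n k : ℕ} (i : Fin n) (F : Multiset ℕ → ℝ) :
    tupAvg n k (fun σ => F (σ i).cycleType) = cycAvg k F := by
  have := avg_surj (Pi.evalMonoidHom (fun _ : Fin n => Perm (Fin k)) i)
    (Function.surjective_eval i) (fun g => F g.cycleType)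
  rw [card_tup, Fintype.card_perm, Fintype.card_fin] at this
  exact this

lemma tupAvg_two {n k : ℕ} (i j : Fin n) (hij : i ≠ j) (F : Perm (Fin k) × Perm (Fin k) → ℝ) :
    tupAvg n k (fun σ => F (σ i, σ j)) = (∑ gh, F gh) / (k.factorial : ℝ) ^ 2 := by
  classical
  have := avg_surj ((Pi.evalMonoidHom (fun _ : Fin n => Perm (Fin k)) i).prod
    (Pi.evalMonoidHom (fun _ : Fin n => Perm (Fin k)) j)) (by
      rintro ⟨g, h⟩
      refine ⟨Function.update (fun _ => h) i g, ?_⟩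
      simp [Function.update_of_ne hij.symm]) F
  rw [card_tup, Fintype.card_prod, Fintype.card_perm, Fintype.card_fin] at this
  rw [sq]
  push_cast at this
  exact this

lemma tupAvg_mul {n k : ℕ} (i j : Fin n) (hij : i ≠ j) (F G : Multiset ℕ → ℝ) :
    tupAvg n k (fun σ => F (σ i).cycleType * G (σ j).cycleType) = cycAvg k F * cycAvg k G := by
  have := tupAvg_two (k := k) i j hij (fun gh => F gh.1.cycleType * G gh.2.cycleType)
  rw [this, cycAvg, cycAvg, Fintype.sum_prod_type, div_mul_div_comm, Finset.sum_mul_sum, sq]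

lemma tupAvg_preprim {n k : ℕ} (i j : Fin n) (hij : i ≠ j) (hk : 1 ≤ k)
    [∀ σ : Fin n → Perm (Fin k), Decidable (IsPreprimitive (Subgroup.closure {σ i, σ j}) (Fin k))] :
    tupAvg n k (fun σ => if IsPreprimitive (Subgroup.closure {σ i, σ j}) (Fin k) then 0 else 1) ≤
      invChoose k + invChoose (k-1) := by
  classical
  obtain ⟨k, rfl⟩ : ∃ l, k = l + 1 := ⟨k - 1, by omega⟩
  refine le_trans (le_of_eq ?_) (not_preprim_count k)
  have := tupAvg_two (k := k+1) i j hij (fun gh =>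
    if IsPreprimitive (Subgroup.closure {gh.1, gh.2}) (Fin (k+1)) then 0 else 1)
  rw [Nat.card_eq_fintype_card, Fintype.card_subtype]
  convert this using 2
  · ext σ
    congr
  rw [Finset.card_filter]
  push_cast
  apply Finset.sum_congr rfl
  intro x _
  split_ifs <;> simp_all

lemma bad_avg {m k : ℕ} (hk : 5 ≤ k) (P : Finset ℕ)
    (hP : ∀ p ∈ P, p.Prime ∧ 3 ≤ p ∧ 2 * p ≤ k) (hpos : 0 < ∑ p ∈ P, (1 / p : ℝ)) :
    1 - (Nat.card {σ : Fin (m+2) → Perm (Fin k) // circGen σ = signGroup σ} : ℝ) /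
          (Nat.factorial k : ℝ) ^ (m+2) ≤
      (invChoose k + invChoose (k-1)) + 1 / (∑ p ∈ P, (1 / p : ℝ)) +
        (m + 2) * (harm k * ∑ p ∈ P, (1 / (p:ℝ)^2)) := by
  classical
  have hfac : (0:ℝ) < (k.factorial : ℝ) ^ (m+2) := by positivity
  have e1 : 1 - (Nat.card {σ : Fin (m+2) → Perm (Fin k) // circGen σ = signGroup σ} : ℝ) /
          (Nat.factorial k : ℝ) ^ (m+2) =
      tupAvg (m+2) k (fun σ => if circGen σ = signGroup σ then 0 else 1) := by
    have h1 : tupAvg (m+2) k (fun σ => (if circGen σ = signGroup σ then 1 else 0) +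
        (if circGen σ = signGroup σ then 0 else 1)) = 1 := by
      have : (fun σ : Fin (m+2) → Perm (Fin k) =>
          (if circGen σ = signGroup σ then (1:ℝ) else 0) +
          (if circGen σ = signGroup σ then 0 else 1)) = fun _ => 1 := by
        ext σ; split_ifs <;> simp
      rw [this, tupAvg, Finset.sum_const, Finset.card_univ, nsmul_eq_mul, card_tup, mul_one,
        div_self hfac.ne']
    rw [tupAvg_add] at h1
    have h2 : tupAvg (m+2) k (fun σ => if circGen σ = signGroup σ then 1 else 0) =
        (Nat.card {σ : Fin (m+2) → Perm (Fin k) // circGen σ = signGroup σ} : ℝ) /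
          (Nat.factorial k : ℝ) ^ (m+2) := by
      rw [tupAvg, Nat.card_eq_fintype_card, Fintype.card_subtype, Finset.sum_boole]
    rw [← h2]; linarith
  rw [e1]
  let Aa : (Fin (m+2) → Perm (Fin k)) → ℝ := fun σ =>
    if IsPreprimitive (Subgroup.closure {σ 0, σ 1}) (Fin k) then 0 else 1
  let N : Multiset ℕ → ℝ := fun c => if ∃ p ∈ P, p ∈ c then 0 else 1
  let D : ℕ → Multiset ℕ → ℝ := fun p c => (c.count p : ℝ) * (dvdCount p c - 1)
  let E : (Fin (m+2) → Perm (Fin k)) → ℝ := fun σ =>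
    ∑ j ∈ (Finset.univ.erase (0 : Fin (m+2))), ∑ p ∈ P,
      ((σ 0).cycleType.count p : ℝ) * dvdCount p (σ j).cycleType
  have hD0 : ∀ p c, 0 ≤ D p c := by
    intro p c
    by_cases hpc : p ∈ c
    · apply mul_nonneg (by positivity)
      have : 0 < (c.filter (p ∣ ·)).card :=
        Multiset.card_pos_iff_exists_mem.mpr ⟨p, Multiset.mem_filter.mpr ⟨hpc, dvd_rfl⟩⟩
      have h : (1:ℝ) ≤ dvdCount p c := by unfold dvdCount; exact_mod_cast this
      linarith
    · simp [D, Multiset.count_eq_zero_of_notMem hpc]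
  have hE0 : ∀ σ, 0 ≤ E σ := fun σ => by
    simp only [E, dvdCount]; positivity
  have hN0 : ∀ c, 0 ≤ N c := fun c => by simp only [N]; split_ifs <;> norm_num
  have hA0 : ∀ σ, 0 ≤ Aa σ := fun c => by simp only [Aa]; split_ifs <;> norm_num
  have hS0 : ∀ c, 0 ≤ ∑ p ∈ P, D p c := fun c => Finset.sum_nonneg fun p _ => hD0 p c
  have key : ∀ σ : Fin (m+2) → Perm (Fin k), (if circGen σ = signGroup σ then (0:ℝ) else 1) ≤
      ((Aa σ + N (σ 0).cycleType) + ∑ p ∈ P, D p (σ 0).cycleType) + E σ := by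
    intro σ
    have a1 := hA0 σ
    have a2 := hN0 (σ 0).cycleType
    have a3 := hS0 (σ 0).cycleType
    have a4 := hE0 σ
    split_ifs with hg
    · linarith
    by_contra! hlt
    apply hg
    have hprim : IsPreprimitive (Subgroup.closure {σ 0, σ 1}) (Fin k) := by
      by_contra hc
      have : Aa σ = 1 := if_neg hc
      linarith
    have hex : ∃ p ∈ P, p ∈ (σ 0).cycleType := by
      by_contra hc
      have : N (σ 0).cycleType = 1 := if_neg hc
      linarith
    obtain ⟨p, hpP, hpc⟩ := hex
    have hcount : (1:ℝ) ≤ (σ 0).cycleType.count p := by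
      exact_mod_cast Multiset.one_le_count_iff_mem.mpr hpc
    obtain ⟨hp, hp3, hpk⟩ := hP p hpP
    refine circGen_eq_of_good σ hk hprim p hp hp3 hpk hpc ?_ ?_
    · by_contra! hc
      have h1 : (2:ℝ) ≤ dvdCount p (σ 0).cycleType := by
        unfold dvdCount; exact_mod_cast hc
      have h2 : (1:ℝ) ≤ D p (σ 0).cycleType := by
        simp only [D]; nlinarith
      have h3 : D p (σ 0).cycleType ≤ ∑ p ∈ P, D p (σ 0).cycleType :=
        Finset.single_le_sum (f := fun p => D p (σ 0).cycleType) (fun q _ => hD0 q _) hpP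
      linarith
    · intro j hj hdvd
      have h1 : (1:ℝ) ≤ dvdCount p (σ j).cycleType := by
        rw [← lcm_cycleType] at hdvd
        have hx : ∃ x ∈ (σ j).cycleType, p ∣ x := by
          by_contra! hc
          have : ∀ c : Multiset ℕ, (∀ x ∈ c, ¬ p ∣ x) → ¬ p ∣ c.lcm := by
            intro c
            induction c using Multiset.induction with
            | empty => intro _ h; simp at h; exact hp.one_lt.ne' h
            | cons a c ih =>
              intro h1 h2
              rw [Multiset.lcm_cons] at h2
              rcases (hp.dvd_mul).mp (h2.trans (Nat.lcm_dvd_mul _ _)) with h | h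
              · exact h1 a (by simp) h
              · exact ih (fun x hx => h1 x (by simp [hx])) h
          exact this _ hc hdvd
        obtain ⟨x, hx, hpx⟩ := hx
        have : 0 < ((σ j).cycleType.filter (p ∣ ·)).card :=
          Multiset.card_pos_iff_exists_mem.mpr ⟨x, Multiset.mem_filter.mpr ⟨hx, hpx⟩⟩
        unfold dvdCount; exact_mod_cast this
      have h2 : ((σ 0).cycleType.count p : ℝ) * dvdCount p (σ j).cycleType ≤ E σ := by
        have hnn : ∀ (q : ℕ) (i : Fin (m+2)),
            0 ≤ ((σ 0).cycleType.count q : ℝ) * dvdCount q (σ i).cycleType := by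
          intro q i; unfold dvdCount; positivity
        calc _ ≤ ∑ p ∈ P, ((σ 0).cycleType.count p : ℝ) * dvdCount p (σ j).cycleType :=
              Finset.single_le_sum
                (f := fun p => ((σ 0).cycleType.count p : ℝ) * dvdCount p (σ j).cycleType)
                (fun q _ => hnn q j) hpP
          _ ≤ _ := Finset.single_le_sum
                (f := fun j => ∑ p ∈ P, ((σ 0).cycleType.count p : ℝ) * dvdCount p (σ j).cycleType)
                (fun i _ => Finset.sum_nonneg fun q _ => hnn q i)
                (Finset.mem_erase.mpr ⟨hj, Finset.mem_univ j⟩)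
      nlinarith
  refine (tupAvg_mono key).trans ?_
  rw [tupAvg_add, tupAvg_add, tupAvg_add]
  have b1 : tupAvg (m+2) k Aa ≤ invChoose k + invChoose (k-1) :=
    tupAvg_preprim 0 1 (by simp) (by omega)
  have b2 : tupAvg (m+2) k (fun σ => N (σ 0).cycleType) ≤ 1 / (∑ p ∈ P, (1 / p : ℝ)) := by
    rw [tupAvg_one 0 N]
    have := cycAvg_none_le (k := k) P (fun p hp => by
      have := hP p hp; omega) hpos
    convert this
  have b3 : tupAvg (m+2) k (fun σ => ∑ p ∈ P, D p (σ 0).cycleType) ≤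
      harm k * ∑ p ∈ P, (1 / (p:ℝ)^2) := by
    rw [tupAvg_one 0 (fun c => ∑ p ∈ P, D p c), cycAvg_sum, Finset.mul_sum]
    apply Finset.sum_le_sum
    intro p hp
    rw [mul_one_div]
    have := hP p hp
    exact cycAvg_double_le (by omega) (by omega)
  have b4 : tupAvg (m+2) k E ≤ (m + 1) * (harm k * ∑ p ∈ P, (1 / (p:ℝ)^2)) := by
    simp only [E]
    rw [tupAvg_sum]
    have : ∀ j ∈ Finset.univ.erase (0 : Fin (m+2)), tupAvg (m+2) k (fun σ => ∑ p ∈ P,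
        ((σ 0).cycleType.count p : ℝ) * dvdCount p (σ j).cycleType) ≤
        harm k * ∑ p ∈ P, (1 / (p:ℝ)^2) := by
      intro j hj
      have hj0 : (0 : Fin (m+2)) ≠ j := (Finset.mem_erase.mp hj).1.symm
      rw [tupAvg_sum, Finset.mul_sum]
      apply Finset.sum_le_sum
      intro p hp
      have hpp := hP p hp
      rw [tupAvg_mul 0 j hj0 (fun c => (c.count p : ℝ)) (dvdCount p)]
      have c1 := cycAvg_count_le (k := k) (a := p) (by omega)
      have c2 := cycAvg_dvdCount_le k p (by omega)
      have c3 : 0 ≤ cycAvg k (dvdCount p) := by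
        unfold cycAvg dvdCount; positivity
      calc _ ≤ (1 / (p:ℝ)) * (harm k / p) := by
            apply mul_le_mul c1 c2 c3 (by positivity)
        _ = _ := by rw [sq]; field_simp
    refine (Finset.sum_le_sum this).trans (le_of_eq ?_)
    rw [Finset.sum_const, Finset.card_erase_of_mem (Finset.mem_univ _), Finset.card_univ,
      Fintype.card_fin, nsmul_eq_mul]
    push_cast
    simp
  linarith

/-- The group circularly generated by `n` uniformly random permutations of `k` points
generically equals `A_k^n ⋊ ⟨c sgn_π(σ_0, …, σ_{n−1})⟩`. -/
theorem circGen_eq_signGroup_probability (n : ℕ) (hn : 2 ≤ n) :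
    Filter.Tendsto
      (fun k : ℕ =>
        (Nat.card {σ : Fin n → Equiv.Perm (Fin k) // circGen σ = signGroup σ} : ℝ) /
          (Nat.factorial k : ℝ) ^ n)
      Filter.atTop (nhds 1) := by
  obtain ⟨m, rfl⟩ : ∃ m, n = m + 2 := ⟨n - 2, by omega⟩
  obtain ⟨P, hP, hP1, hP2⟩ := exists_primes
  have hlim : Filter.Tendsto (fun k : ℕ => 1 - ((invChoose k + invChoose (k-1)) +
      1 / (∑ p ∈ P k, (1 / p : ℝ)) + (m + 2) * (harm k * ∑ p ∈ P k, (1 / (p:ℝ)^2))))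
      Filter.atTop (nhds 1) := by
    have h1 := invChoose_tendsto
    have h2 : Filter.Tendsto (fun k : ℕ => invChoose (k-1)) Filter.atTop (nhds 0) :=
      invChoose_tendsto.comp (Filter.tendsto_sub_atTop_nat 1)
    have h3 : Filter.Tendsto (fun k => 1 / (∑ p ∈ P k, (1 / p : ℝ))) Filter.atTop (nhds 0) :=
      tendsto_const_nhds.div_atTop hP1
    have h4 := hP2.const_mul ((m:ℝ) + 2)
    have := (((h1.add h2).add h3).add h4).const_sub 1
    simpa using this
  refine tendsto_of_tendsto_of_tendsto_of_le_of_le' hlim tendsto_const_nhds ?_ ?_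
  · filter_upwards [hP, hP1.eventually_gt_atTop 0, Filter.eventually_ge_atTop 5] with k h1 h2 h3
    have := bad_avg (m := m) h3 (P k) h1 h2
    linarith
  · refine Filter.Eventually.of_forall fun k => ?_
    apply div_le_one_of_le₀ _ (by positivity)
    have : Nat.card {σ : Fin (m+2) → Equiv.Perm (Fin k) // circGen σ = signGroup σ} ≤
        Nat.card (Fin (m+2) → Equiv.Perm (Fin k)) := Finite.card_subtype_le _
    rw [← card_tup, ← Nat.card_eq_fintype_card]
    exact_mod_cast this
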